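/- Fix n ≥ 1 and any weight function c : Fin (2n − 1) × Hexatag → ℝ. A binary head tree T* with n leaves maximizes the total score Σₖ c(k, hexatags(T)ₖ) over all BHTs T with n leaves if and only if the list hexatags(T*) maximizes Σₖ c(k, τₖ) over all valid hexatag lists τ of length 2n − 1; in particular, both maxima exist and are equal (exactness of decoding over valid sequences). -/

import Mathlib

/-- Binary head trees (BHTs). -/
inductive BHT : Type where
  | leaf : BHT
  | nodeL (l r : BHT) : BHT
  | nodeR (l r : BHT) : BHT

/-- Number of leaves of a BHT. -/
def BHT.numLeaves : BHT → ℕ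
  | .leaf => 1
  | .nodeL l r => l.numLeaves + r.numLeaves
  | .nodeR l r => l.numLeaves + r.numLeaves

/-- Head position of a BHT whose span of leaf positions starts at `i`. -/
def BHT.headAt : BHT → ℕ → ℕ
  | .leaf, i => i
  | .nodeL l _, i => l.headAt i
  | .nodeR l r, i => r.headAt (i + l.numLeaves)

/-- Head position of a BHT placed over positions `0, …, numLeaves - 1`. -/
def BHT.head (T : BHT) : ℕ := T.headAt 0

/-- Arc set of a BHT whose span of leaf positions starts at `i`. -/
def BHT.arcsAt : BHT → ℕ → Set (ℕ × ℕ)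
  | .leaf, _ => ∅
  | .nodeL l r, i =>
      insert (l.headAt i, r.headAt (i + l.numLeaves)) (l.arcsAt i ∪ r.arcsAt (i + l.numLeaves))
  | .nodeR l r, i =>
      insert (r.headAt (i + l.numLeaves), l.headAt i) (l.arcsAt i ∪ r.arcsAt (i + l.numLeaves))

/-- Arc set of a BHT placed over positions `0, …, numLeaves - 1`. -/
def BHT.arcs (T : BHT) : Set (ℕ × ℕ) := T.arcsAt 0

/-- `S` is a subtree of `T` (placed over positions `0, …, numLeaves - 1`) whose
leaf span starts at absolute position `i`. -/
inductive BHT.SubtreeAt : BHT → ℕ → BHT → Prop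
  | refl (T : BHT) : BHT.SubtreeAt T 0 T
  | inlL (l r S : BHT) (i : ℕ) : BHT.SubtreeAt l i S → BHT.SubtreeAt (BHT.nodeL l r) i S
  | inrL (l r S : BHT) (i : ℕ) :
      BHT.SubtreeAt r i S → BHT.SubtreeAt (BHT.nodeL l r) (l.numLeaves + i) S
  | inlR (l r S : BHT) (i : ℕ) : BHT.SubtreeAt l i S → BHT.SubtreeAt (BHT.nodeR l r) i S
  | inrR (l r S : BHT) (i : ℕ) :
      BHT.SubtreeAt r i S → BHT.SubtreeAt (BHT.nodeR l r) (l.numLeaves + i) S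

/-- `bht2dep T j = some i` if `i` is the unique position with `(i, j) ∈ arcs T`,
and `none` if `j` has no incoming arc. -/
noncomputable def bht2dep (n : ℕ) (T : BHT) : Fin n → Option (Fin n) := fun j =>
  letI := Classical.dec (∃! i : Fin n, ((i : ℕ), (j : ℕ)) ∈ T.arcs)
  if h : ∃! i : Fin n, ((i : ℕ), (j : ℕ)) ∈ T.arcs then some h.choose else none

/-- `head` is a dependency tree on `n` words: exactly one root (position with
`head r = none`), and every position reaches the root by iterating `head`. -/
def IsDepTree {n : ℕ} (head : Fin n → Option (Fin n)) : Prop :=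
  ∃ r : Fin n, head r = none ∧ (∀ r' : Fin n, head r' = none → r' = r) ∧
    ∀ j : Fin n, Relation.ReflTransGen (fun a b => head a = some b) j r

/-- A dependency tree is projective if every position's set of descendants is an
interval of consecutive positions. -/
def Projective {n : ℕ} (head : Fin n → Option (Fin n)) : Prop :=
  ∀ i : Fin n, ∃ a b : Fin n,
    ∀ j : Fin n, Relation.ReflTransGen (fun x y => head x = some y) j i ↔ (a ≤ j ∧ j ≤ b)

/-- The six hexatags: `tL`/`tR` are terminal tags (leaf that is a left/right child);
`leftL`/`leftR` are `⇐L`/`⇐R` (internal left child with head-label L/R);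
`rightL`/`rightR` are `⇒L`/`⇒R` (internal right child with head-label L/R). -/
inductive Hexatag : Type where
  | tL | tR | leftL | leftR | rightL | rightR
deriving DecidableEq

/-- A hexatag is terminal if it is `tL` or `tR`. -/
def Hexatag.isTerminal : Hexatag → Prop
  | .tL => True
  | .tR => True
  | _ => False

/-- In-order linearization; the Boolean records whether the current subtree is a
right child of its parent (the root counts as a left child by convention). -/
def BHT.hexatagsAux : BHT → Bool → List Hexatag
  | .leaf, false => [.tL]
  | .leaf, true => [.tR]
  | .nodeL l r, b =>
      l.hexatagsAux false ++ (if b then Hexatag.rightL else Hexatag.leftL) :: r.hexatagsAux true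
  | .nodeR l r, b =>
      l.hexatagsAux false ++ (if b then Hexatag.rightR else Hexatag.leftR) :: r.hexatagsAux true

/-- The hexatag linearization of a BHT. -/
def BHT.hexatags (T : BHT) : List Hexatag := T.hexatagsAux false

/-- The tags emitted for the leaves of a BHT, in left-to-right order. -/
def BHT.leafTagsAux : BHT → Bool → List Hexatag
  | .leaf, false => [.tL]
  | .leaf, true => [.tR]
  | .nodeL l r, _ => l.leafTagsAux false ++ r.leafTagsAux true
  | .nodeR l r, _ => l.leafTagsAux false ++ r.leafTagsAux true

/-- The tags emitted for the leaves of a BHT in left-to-right order (root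
counts as a left child by convention). -/
def BHT.leafTags (T : BHT) : List Hexatag := T.leafTagsAux false

/-- Partial BHTs: binary head trees possibly containing a dummy placeholder. -/
inductive PBHT : Type where
  | dummy : PBHT
  | leaf : PBHT
  | nodeL (l r : PBHT) : PBHT
  | nodeR (l r : PBHT) : PBHT
deriving DecidableEq

/-- Does a partial BHT contain a dummy? -/
def PBHT.hasDummy : PBHT → Bool
  | .dummy => true
  | .leaf => false
  | .nodeL l r => l.hasDummy || r.hasDummy
  | .nodeR l r => l.hasDummy || r.hasDummy

/-- Substitute `u` for the dummy in a partial BHT. -/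
def PBHT.subst : PBHT → PBHT → PBHT
  | .dummy, u => u
  | .leaf, _ => .leaf
  | .nodeL l r, u => .nodeL (l.subst u) (r.subst u)
  | .nodeR l r, u => .nodeR (l.subst u) (r.subst u)

/-- One step of the left-corner decoder on a stack of partial BHTs. -/
def hexStep : List PBHT → Hexatag → Option (List PBHT)
  | st, .tL => some (.leaf :: st)
  | t :: st, .tR => if t.hasDummy then some (t.subst .leaf :: st) else none
  | t :: st, .leftL => some (.nodeL t .dummy :: st)
  | t :: st, .leftR => some (.nodeR t .dummy :: st)
  | t :: u :: st, .rightL =>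
      if u.hasDummy then some (u.subst (.nodeL t .dummy) :: st) else none
  | t :: u :: st, .rightR =>
      if u.hasDummy then some (u.subst (.nodeR t .dummy) :: st) else none
  | _, _ => none

/-- The left-corner decoder: run the stack operations; succeed iff every
operation is defined and the final stack is a single dummy-free tree. -/
def tags2bht (τ : List Hexatag) : Option PBHT :=
  match τ.foldlM hexStep ([] : List PBHT) with
  | some [t] => if t.hasDummy then none else some t
  | _ => none

/-- Embedding of BHTs into partial BHTs. -/
def BHT.toPBHT : BHT → PBHT
  | .leaf => .leaf
  | .nodeL l r => .nodeL l.toPBHT r.toPBHT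
  | .nodeR l r => .nodeR l.toPBHT r.toPBHT

/-- Stack-count increment of a hexatag. -/
def Hexatag.delta : Hexatag → ℤ
  | .tL => 1
  | .tR => 0
  | .leftL => 0
  | .leftR => 0
  | .rightL => -1
  | .rightR => -1

/-- Running stack count `sₖ` after the first `k` tags of `τ`. -/
def stackCount (τ : List Hexatag) (k : ℕ) : ℤ :=
  ((τ.take k).map Hexatag.delta).sum

/-- Validity of a hexatag list (0-indexed: Lean index `k` is 1-indexed position `k+1`). -/
def ValidTags (τ : List Hexatag) : Prop :=
  (τ.length % 2 = 1 ∧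
    ∀ k : ℕ, ∀ t : Hexatag, τ[k]? = some t →
      (k % 2 = 0 → t.isTerminal) ∧ (k % 2 = 1 → ¬ t.isTerminal)) ∧
  τ[0]? = some Hexatag.tL ∧
  (∀ k : ℕ, ∀ t : Hexatag, τ[k]? = some t →
    (t = Hexatag.rightL ∨ t = Hexatag.rightR) → 2 ≤ stackCount τ k) ∧
  stackCount τ τ.length = 1

/-- Total score of a hexatag list of length `2n - 1` under position-wise weights `c`. -/
noncomputable def score (n : ℕ) (c : Fin (2 * n - 1) × Hexatag → ℝ) (τ : List Hexatag) : ℝ :=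
  ∑ k : Fin (2 * n - 1), c (k, τ.getD (k : ℕ) Hexatag.tL)

/-!
A legal sequence of tags is a left-corner parse. After an even number of tags the input read so far
is a concatenation of contexts, i.e. of trees whose last right child is still missing; after an odd
number of tags one completed tree follows the contexts. The stack count is the number of these
pieces, so the bound `2 ≤ sₖ₋₁` guarantees that a context is available to absorb the completed tree
at each `⇒`, and `sₘ = 1` says that a single tree is left at the end. Hence the valid lists are
exactly the linearizations of trees, and both optimization problems range over the same finite set
of lists.
-/

instance : Finite Hexatag :=
  Fintype.finite ⟨{.tL, .tR, .leftL, .leftR, .rightL, .rightR}, by rintro ⟨⟩ <;> decide⟩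

/-- The stack height after reading the whole of `τ`, starting from the empty stack. -/
def stackHeight (τ : List Hexatag) : ℤ := (τ.map Hexatag.delta).sum

@[simp] theorem stackHeight_nil : stackHeight [] = 0 := rfl

@[simp] theorem stackHeight_cons (t : Hexatag) (τ : List Hexatag) :
    stackHeight (t :: τ) = t.delta + stackHeight τ := by
  simp [stackHeight]

@[simp] theorem stackHeight_append (σ τ : List Hexatag) :
    stackHeight (σ ++ τ) = stackHeight σ + stackHeight τ := by
  simp [stackHeight]

theorem stackHeight_flatten (L : List (List Hexatag)) :
    stackHeight L.flatten = (L.map stackHeight).sum := by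
  induction L with
  | nil => rfl
  | cons τ L ih => simp [ih]

/-- The conditions which validity imposes on a tag `t` read after the prefix `p`. The requirement
`τ₁ = tL` becomes the condition on the empty prefix. -/
def IsLegalStep (p : List Hexatag) (t : Hexatag) : Prop :=
  (t.isTerminal ↔ Even p.length) ∧ (p = [] → t = .tL) ∧
    (t = .rightL ∨ t = .rightR → 2 ≤ stackHeight p)

/-- A list all of whose tags are legal after the tags preceding them: an initial segment of a
run of the stack automaton, without the acceptance condition. -/
def LegalRun (τ : List Hexatag) : Prop :=
  ∀ k t, τ[k]? = some t → IsLegalStep (τ.take k) t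

theorem legalRun_nil : LegalRun [] := by
  simp [LegalRun]

theorem legalRun_append_singleton {p : List Hexatag} {t : Hexatag} :
    LegalRun (p ++ [t]) ↔ LegalRun p ∧ IsLegalStep p t := by
  constructor
  · refine fun h => ⟨fun k u hu => ?_, by simpa using h p.length t⟩
    have hk : k < p.length := (List.getElem?_eq_some_iff.1 hu).1
    simpa [List.take_append_of_le_length hk.le] using
      h k u (by rwa [List.getElem?_append_left hk])
  · rintro ⟨hp, ht⟩ k u hu
    obtain hk | rfl | hk := lt_trichotomy k p.length
    · rw [List.getElem?_append_left hk] at hu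
      simpa [List.take_append_of_le_length hk.le] using hp k u hu
    · obtain rfl : t = u := by simpa using hu
      simpa using ht
    · have := (List.getElem?_eq_some_iff.1 hu).1
      grind

theorem validTags_iff_legalRun {τ : List Hexatag} :
    ValidTags τ ↔ LegalRun τ ∧ Odd τ.length ∧ stackHeight τ = 1 := by
  have height : stackCount τ τ.length = stackHeight τ := by simp [stackCount, stackHeight]
  have take_length {k t} (h : τ[k]? = some t) : (τ.take k).length = k :=
    List.length_take_of_le (List.getElem?_eq_some_iff.1 h).1.le
  rw [ValidTags, height, Nat.odd_iff]
  constructor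
  · rintro ⟨⟨hodd, halt⟩, hfirst, hpop, hheight⟩
    refine ⟨fun k t hk => ⟨?_, fun hnil => ?_, hpop k t hk⟩, hodd, hheight⟩
    · rw [take_length hk, Nat.even_iff]
      have := halt k t hk
      grind
    · obtain rfl : k = 0 := by simpa [hnil] using (take_length hk).symm
      exact Option.some.inj (hk.symm.trans hfirst)
  · rintro ⟨hrun, hodd, hheight⟩
    refine ⟨⟨hodd, fun k t hk => ?_⟩, ?_, fun k t hk => (hrun k t hk).2.2, hheight⟩
    · have := (hrun k t hk).1
      rw [take_length hk, Nat.even_iff] at this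
      grind
    · obtain ⟨t, σ, rfl⟩ := List.exists_cons_of_ne_nil (l := τ) (by rintro rfl; simp at hodd)
      exact congrArg some ((hrun 0 t rfl).2.1 rfl)

namespace BHT

theorem length_hexatagsAux (T : BHT) (b : Bool) :
    (T.hexatagsAux b).length + 1 = 2 * T.numLeaves := by
  induction T generalizing b with
  | leaf => cases b <;> rfl
  | nodeL l r ihl ihr | nodeR l r ihl ihr =>
    have hl := ihl false
    have hr := ihr true
    simp only [hexatagsAux, numLeaves, List.length_append, List.length_cons]
    lia

theorem odd_length_hexatagsAux (T : BHT) (b : Bool) : Odd (T.hexatagsAux b).length := by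
  have := T.length_hexatagsAux b
  grind

theorem stackHeight_hexatagsAux (T : BHT) (b : Bool) :
    stackHeight (T.hexatagsAux b) = if b then 0 else 1 := by
  induction T generalizing b with
  | leaf => cases b <;> rfl
  | nodeL l r ihl ihr | nodeR l r ihl ihr =>
    cases b <;> simp [hexatagsAux, ihl, ihr, Hexatag.delta]

end BHT

theorem LegalRun.append_hexatagsAux {p : List Hexatag} (hp : LegalRun p) (heven : Even p.length)
    (T : BHT) {b : Bool} (hheight : (if b then 1 else 0) ≤ stackHeight p) :
    LegalRun (p ++ T.hexatagsAux b) := by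
  induction T generalizing p b with
  | leaf =>
    have hne : b = true → p ≠ [] := by
      rintro rfl rfl
      simp at hheight
    cases b <;> refine legalRun_append_singleton.2 ⟨hp, ?_⟩ <;>
      simp_all [IsLegalStep, Hexatag.isTerminal]
  | nodeL l r ihl ihr | nodeR l r ihl ihr =>
    have hl : LegalRun (p ++ l.hexatagsAux false) := ihl hp heven (by grind)
    have hodd : Odd (p ++ l.hexatagsAux false).length := by
      rw [List.length_append]
      exact heven.add_odd (l.odd_length_hexatagsAux false)
    have hne : p ++ l.hexatagsAux false ≠ [] := fun h => by simp [h] at hodd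
    have hheight_l : stackHeight (p ++ l.hexatagsAux false) = stackHeight p + 1 := by
      rw [stackHeight_append, l.stackHeight_hexatagsAux, if_neg Bool.false_ne_true]
    rw [BHT.hexatagsAux, List.append_cons, ← List.append_assoc, ← List.append_assoc]
    refine ihr (legalRun_append_singleton.2 ⟨hl, ?_⟩) ?_ ?_
    · grind [IsLegalStep, Hexatag.isTerminal]
    · rw [List.length_append, List.length_singleton]
      exact hodd.add_one
    · rw [stackHeight_append, hheight_l]
      cases b <;> simpa [Hexatag.delta] using hheight

theorem BHT.validTags_hexatags (T : BHT) : ValidTags T.hexatags :=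
  validTags_iff_legalRun.2 ⟨legalRun_nil.append_hexatagsAux Even.zero T (b := false) le_rfl,
    T.odd_length_hexatagsAux false, T.stackHeight_hexatagsAux false⟩

/-- The language of linearizations of trees. -/
def treeTags : Language Hexatag := Set.range BHT.hexatags

/-- The language of contexts: linearizations of trees with a gap in place of the right child at
the end of the right spine. They are described by what happens when the gap is filled, so that
one-hole trees need not be defined. -/
def contextTags : Language Hexatag :=
  {q | ∀ r : BHT, q ++ r.hexatagsAux true ∈ treeTags}

theorem append_tR_mem_treeTags {q : List Hexatag} (hq : q ∈ contextTags) :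
    q ++ [.tR] ∈ treeTags :=
  hq .leaf

theorem append_left_mem_contextTags {τ : List Hexatag} (hτ : τ ∈ treeTags) {x : Hexatag}
    (hx : x = .leftL ∨ x = .leftR) : τ ++ [x] ∈ contextTags := by
  obtain ⟨t, rfl⟩ := hτ
  obtain rfl | rfl := hx
  · exact fun r => ⟨.nodeL t r, by simp [BHT.hexatags, BHT.hexatagsAux]⟩
  · exact fun r => ⟨.nodeR t r, by simp [BHT.hexatags, BHT.hexatagsAux]⟩

theorem append_right_mem_contextTags {q τ : List Hexatag} (hq : q ∈ contextTags)
    (hτ : τ ∈ treeTags) {x : Hexatag} (hx : x = .rightL ∨ x = .rightR) :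
    q ++ τ ++ [x] ∈ contextTags := by
  obtain ⟨t, rfl⟩ := hτ
  obtain rfl | rfl := hx
  · exact fun r => by simpa [BHT.hexatags, BHT.hexatagsAux] using hq (.nodeL t r)
  · exact fun r => by simpa [BHT.hexatags, BHT.hexatagsAux] using hq (.nodeR t r)

theorem stackHeight_of_mem_treeTags {τ : List Hexatag} (hτ : τ ∈ treeTags) :
    stackHeight τ = 1 := by
  obtain ⟨T, rfl⟩ := hτ
  exact T.stackHeight_hexatagsAux false

theorem stackHeight_of_mem_contextTags {q : List Hexatag} (hq : q ∈ contextTags) :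
    stackHeight q = 1 := by
  simpa [Hexatag.delta] using stackHeight_of_mem_treeTags (append_tR_mem_treeTags hq)

open scoped Computability

theorem stackHeight_nonneg_of_mem_kstar {p : List Hexatag} (hp : p ∈ contextTags∗) :
    0 ≤ stackHeight p := by
  obtain ⟨L, rfl, hL⟩ := Language.mem_kstar.1 hp
  rw [stackHeight_flatten]
  refine List.sum_nonneg fun h hh => ?_
  obtain ⟨q, hq, rfl⟩ := List.mem_map.1 hh
  simp [stackHeight_of_mem_contextTags (hL q hq)]

theorem exists_append_of_mem_kstar {α : Type*} {l : Language α} {p : List α} (hp : p ∈ l∗)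
    (hne : p ≠ []) : ∃ a ∈ l∗, ∃ q ∈ l, a ++ q = p := by
  rw [← Language.one_add_kstar_mul_self_eq_kstar, Language.mem_add, Language.mem_one] at hp
  exact Language.mem_mul.1 (hp.resolve_left hne)

theorem append_mem_kstar {α : Type*} {l : Language α} {p q : List α} (hp : p ∈ l∗) (hq : q ∈ l) :
    p ++ q ∈ l∗ :=
  (kstar_mul_le_kstar : l∗ * l ≤ l∗) (Language.append_mem_mul hp hq)

theorem IsLegalStep.append_mem_kstar_mul_treeTags {p : List Hexatag} {t : Hexatag}
    (ht : IsLegalStep p t) (heven : Even p.length) (hp : p ∈ contextTags∗) :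
    p ++ [t] ∈ contextTags∗ * treeTags := by
  obtain ⟨hterm, hfirst, -⟩ := ht
  cases t with
  | tL => exact Language.append_mem_mul hp ⟨.leaf, rfl⟩
  | tR =>
    obtain ⟨a, ha, q, hq, rfl⟩ := exists_append_of_mem_kstar hp fun h => by cases hfirst h
    rw [List.append_assoc]
    exact Language.append_mem_mul ha (append_tR_mem_treeTags hq)
  | _ => exact (hterm.2 heven).elim

theorem IsLegalStep.append_mem_contextTags_kstar {p : List Hexatag} {t : Hexatag}
    (ht : IsLegalStep p t) (hodd : Odd p.length) (hp : p ∈ contextTags∗ * treeTags) :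
    p ++ [t] ∈ contextTags∗ := by
  obtain ⟨hterm, -, hpop⟩ := ht
  obtain ⟨a, ha, τ, hτ, rfl⟩ := Language.mem_mul.1 hp
  have push (hx : t = .leftL ∨ t = .leftR) : a ++ τ ++ [t] ∈ contextTags∗ := by
    rw [List.append_assoc]
    exact append_mem_kstar ha (append_left_mem_contextTags hτ hx)
  have reduce (hx : t = .rightL ∨ t = .rightR) : a ++ τ ++ [t] ∈ contextTags∗ := by
    have ha_ne : a ≠ [] := by
      rintro rfl
      have := hpop hx
      simp [stackHeight_of_mem_treeTags hτ] at this
    obtain ⟨b, hb, q, hq, rfl⟩ := exists_append_of_mem_kstar ha ha_ne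
    simpa only [List.append_assoc] using
      append_mem_kstar hb (append_right_mem_contextTags hq hτ hx)
  cases t with
  | tL | tR => exact (Nat.not_even_iff_odd.2 hodd (hterm.1 trivial)).elim
  | leftL | leftR => exact push (by simp)
  | rightL | rightR => exact reduce (by simp)

theorem LegalRun.mem_kstar_of_even_and_mem_kstar_mul_of_odd {τ : List Hexatag}
    (hτ : LegalRun τ) :
    (Even τ.length → τ ∈ contextTags∗) ∧ (Odd τ.length → τ ∈ contextTags∗ * treeTags) := by
  induction τ using List.reverseRecOn with
  | nil => exact ⟨fun _ => Language.nil_mem_kstar _, fun h => by simp at h⟩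
  | append_singleton p t ih =>
    obtain ⟨hp, ht⟩ := legalRun_append_singleton.1 hτ
    obtain ⟨ih_even, ih_odd⟩ := ih hp
    rw [List.length_append, List.length_singleton, Nat.even_add_one, Nat.odd_add_one,
      Nat.not_even_iff_odd, Nat.not_odd_iff_even]
    exact ⟨fun h => ht.append_mem_contextTags_kstar h (ih_odd h),
      fun h => ht.append_mem_kstar_mul_treeTags h (ih_even h)⟩

theorem eq_nil_of_mem_kstar_of_stackHeight_eq_zero {p : List Hexatag} (hp : p ∈ contextTags∗)
    (hheight : stackHeight p = 0) : p = [] := by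
  by_contra hne
  obtain ⟨a, ha, q, hq, rfl⟩ := exists_append_of_mem_kstar hp hne
  rw [stackHeight_append, stackHeight_of_mem_contextTags hq] at hheight
  linarith [stackHeight_nonneg_of_mem_kstar ha]

theorem ValidTags.mem_treeTags {τ : List Hexatag} (hτ : ValidTags τ) : τ ∈ treeTags := by
  obtain ⟨hrun, hodd, hheight⟩ := validTags_iff_legalRun.1 hτ
  obtain ⟨a, ha, σ, hσ, rfl⟩ :=
    Language.mem_mul.1 (hrun.mem_kstar_of_even_and_mem_kstar_mul_of_odd.2 hodd)
  rw [stackHeight_append, stackHeight_of_mem_treeTags hσ, add_eq_right] at hheight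
  rwa [eq_nil_of_mem_kstar_of_stackHeight_eq_zero ha hheight]

theorem image_hexatags_setOf_numLeaves_eq (n : ℕ) :
    BHT.hexatags '' {T | T.numLeaves = n} = {τ | τ.length = 2 * n - 1 ∧ ValidTags τ} := by
  ext τ
  constructor
  · rintro ⟨T, rfl, rfl⟩
    exact ⟨Nat.eq_sub_of_add_eq (T.length_hexatagsAux false), T.validTags_hexatags⟩
  · rintro ⟨hlen, hvalid⟩
    obtain ⟨T, rfl⟩ := hvalid.mem_treeTags
    have : T.hexatags.length + 1 = 2 * T.numLeaves := T.length_hexatagsAux false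
    exact ⟨T, show T.numLeaves = n by lia, rfl⟩

theorem forall_validTags_iff_forall_hexatags {n : ℕ} {P : List Hexatag → Prop} :
    (∀ τ : List Hexatag, τ.length = 2 * n - 1 → ValidTags τ → P τ) ↔
      ∀ T : BHT, T.numLeaves = n → P T.hexatags := by
  constructor
  · intro h T hT
    obtain ⟨hlen, hvalid⟩ := (image_hexatags_setOf_numLeaves_eq n).subset ⟨T, hT, rfl⟩
    exact h _ hlen hvalid
  · intro h τ hlen hvalid
    obtain ⟨T, hT, rfl⟩ := (image_hexatags_setOf_numLeaves_eq n).superset ⟨hlen, hvalid⟩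
    exact h T hT

theorem BHT.exists_numLeaves_eq {n : ℕ} (hn : 1 ≤ n) : ∃ T : BHT, T.numLeaves = n := by
  induction n, hn using Nat.le_induction with
  | base => exact ⟨.leaf, rfl⟩
  | succ n _ ih =>
    obtain ⟨T, rfl⟩ := ih
    exact ⟨.nodeL T .leaf, rfl⟩

theorem decoding_exact_general {α : Type*} [LinearOrder α] (n : ℕ) (hn : 1 ≤ n)
    (f : List Hexatag → α) :
    (∀ Tstar : BHT, Tstar.numLeaves = n →
      ((∀ T : BHT, T.numLeaves = n → f T.hexatags ≤ f Tstar.hexatags) ↔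
        (∀ τ : List Hexatag, τ.length = 2 * n - 1 → ValidTags τ → f τ ≤ f Tstar.hexatags))) ∧
    ∃ T0 : BHT, T0.numLeaves = n ∧
      (∀ T : BHT, T.numLeaves = n → f T.hexatags ≤ f T0.hexatags) ∧
      ∃ τ0 : List Hexatag, τ0.length = 2 * n - 1 ∧ ValidTags τ0 ∧
        (∀ τ : List Hexatag, τ.length = 2 * n - 1 → ValidTags τ → f τ ≤ f τ0) ∧
        f τ0 = f T0.hexatags := by
  refine ⟨fun Tstar _ =>
    (forall_validTags_iff_forall_hexatags (P := fun τ => f τ ≤ f Tstar.hexatags)).symm, ?_⟩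
  have finite : (BHT.hexatags '' {T | T.numLeaves = n}).Finite := by
    rw [image_hexatags_setOf_numLeaves_eq]
    exact (List.finite_length_eq Hexatag _).subset fun τ hτ => hτ.1
  have nonempty : (BHT.hexatags '' {T | T.numLeaves = n}).Nonempty :=
    Set.Nonempty.image _ (BHT.exists_numLeaves_eq hn)
  obtain ⟨_, ⟨T0, hT0, rfl⟩, hmax⟩ := Set.exists_max_image _ f finite nonempty
  have hmax_tree (T : BHT) (hT : T.numLeaves = n) : f T.hexatags ≤ f T0.hexatags :=
    hmax _ ⟨T, hT, rfl⟩
  obtain ⟨hlen, hvalid⟩ := (image_hexatags_setOf_numLeaves_eq n).subset ⟨T0, hT0, rfl⟩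
  exact ⟨T0, hT0, hmax_tree, T0.hexatags, hlen, hvalid,
    forall_validTags_iff_forall_hexatags.2 hmax_tree, rfl⟩

theorem decoding_exact (n : ℕ) (hn : 1 ≤ n) (c : Fin (2 * n - 1) × Hexatag → ℝ) :
    (∀ Tstar : BHT, Tstar.numLeaves = n →
      ((∀ T : BHT, T.numLeaves = n → score n c T.hexatags ≤ score n c Tstar.hexatags) ↔
        (∀ τ : List Hexatag, τ.length = 2 * n - 1 → ValidTags τ →
          score n c τ ≤ score n c Tstar.hexatags))) ∧
    ∃ T0 : BHT, T0.numLeaves = n ∧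
      (∀ T : BHT, T.numLeaves = n → score n c T.hexatags ≤ score n c T0.hexatags) ∧
      ∃ τ0 : List Hexatag, τ0.length = 2 * n - 1 ∧ ValidTags τ0 ∧
        (∀ τ : List Hexatag, τ.length = 2 * n - 1 → ValidTags τ → score n c τ ≤ score n c τ0) ∧
        score n c τ0 = score n c T0.hexatags :=
  decoding_exact_general n hn (score n c)
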